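/- Let d ≥ 3 and let G(x) = c_d |x|^{2−d} be the Green's function of the Laplacian on ℝ^d (with c_d the usual normalising constant). Then for every pair of integers N ≥ 0 and r ≥ 0 there exists a decomposition G = K + R with the following properties: R : ℝ^d → ℝ is of class C^∞; K is supported in the unit ball and can be written K = Σ_{n ≥ 0} K_n, where each K_n : ℝ^d → ℝ is smooth, supported in the ball of radius 2^{−n} about the origin, satisfies sup_x |D^k K_n(x)| ≤ C 2^{n(d−2+|k|)} for every multiindex k with |k| ≤ r, with a constant C uniform in n, and satisfies ∫ K_n(x) P(x) dx = 0 for every polynomial P of degree at most N. -/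

import Mathlib

/-!
Write `G(x) = c |x|^{2-d}` and let `S f (x) = 2^{d-2} f(2x)`, so that `S G = G` away from the
origin. If `R` is a smooth function that agrees with `G` outside the unit ball, then `T = S R - R`
is smooth, is supported in the unit ball, and equals `F - S F` for `F = G - R` (`x ≠ 0`).
Telescoping gives `F = ∑ₙ Sⁿ T` away from the origin, and `Kₙ = Sⁿ T` has the required support
and scaling bounds. It remains to choose `R` such that `T` has vanishing moments.

A moment of order `k` of `S T` is `2^{-2-k}` times that of `T` (`integral_dil`). Replacing `R` by
`R + (1 - a)⁻¹ (S R - R)` with `a = 2^{-2-k}` replaces `T` by `(1 - a)⁻¹ (S T - a T)`, which kills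
the moments of order `k` and keeps those that already vanish (`exists_remainder`). The induction
starts from `R = (1 - χ) G`, where `χ` is a smooth cutoff equal to `1` near the origin.
-/

open MeasureTheory Metric Set Filter

noncomputable section

/-- Euclidean space `ℝ^d`. -/
abbrev Rd (d : ℕ) := EuclideanSpace ℝ (Fin d)

/-- The rescaled and recentred test function `φ_x^λ (y) = λ^{-d} φ(λ⁻¹(y-x))`. -/
def scal {d : ℕ} (φ : Rd d → ℝ) (x : Rd d) (l : ℝ) : Rd d → ℝ :=
  fun y => (l ^ d)⁻¹ * φ (l⁻¹ • (y - x))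

/-- The set `B_r` of `C^r` test functions supported in the unit ball with `C^r` norm at most 1. -/
def Br (d r : ℕ) : Set (Rd d → ℝ) :=
  {φ | ContDiff ℝ (r : ℕ∞) φ ∧ tsupport φ ⊆ closedBall (0 : Rd d) 1 ∧
    ∀ i ≤ r, ∀ y, ‖iteratedFDeriv ℝ i φ y‖ ≤ 1}

/-- A smooth compactly supported function. -/
def IsTestFunction {d : ℕ} (f : Rd d → ℝ) : Prop :=
  ContDiff ℝ (⊤ : ℕ∞) f ∧ HasCompactSupport f

/-- The local continuity estimate making a linear functional on functions a distribution:
on every compact set it is bounded by some `C^k` norm of the test function. -/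
def IsDistribution {d : ℕ} (u : (Rd d → ℝ) →ₗ[ℝ] ℝ) : Prop :=
  ∀ K : Set (Rd d), IsCompact K → ∃ C : ℝ, ∃ k : ℕ, ∀ f : Rd d → ℝ,
    IsTestFunction f → tsupport f ⊆ K → ∀ B : ℝ,
      (∀ i ≤ k, ∀ y, ‖iteratedFDeriv ℝ i f y‖ ≤ B) → |u f| ≤ C * B

/-- Total weight `|k|` of a multiindex. -/
def wt {d : ℕ} (k : Fin d → ℕ) : ℕ := ∑ j, k j

/-- Factorial `k!` of a multiindex. -/
def mfac {d : ℕ} (k : Fin d → ℕ) : ℕ := ∏ j, (k j).factorial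

/-- The monomial `x^k = ∏_j x_j^{k_j}`. -/
def mono {d : ℕ} (k : Fin d → ℕ) (x : Rd d) : ℝ := ∏ j, (x j) ^ (k j)

/-- Partial derivative in the `j`-th coordinate direction. -/
def pderiv1 {d : ℕ} (j : Fin d) (f : Rd d → ℝ) : Rd d → ℝ :=
  fun x => fderiv ℝ f x (EuclideanSpace.single j (1 : ℝ))

/-- Iterated partial derivative in the `j`-th coordinate direction. -/
def pderivPow {d : ℕ} (j : Fin d) : ℕ → (Rd d → ℝ) → Rd d → ℝ
  | 0 => fun f => f
  | n + 1 => fun f => pderiv1 j (pderivPow j n f)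

/-- The multiindex partial derivative `D^k f`. -/
def Dk {d : ℕ} (k : Fin d → ℕ) (f : Rd d → ℝ) : Rd d → ℝ :=
  ((List.ofFn fun j : Fin d => pderivPow j (k j)).foldr (· ∘ ·) id) f

/-! ### Dilations and partial derivatives -/

/-- The dilation `x ↦ a f(t x)` with amplitude `a` and ratio `t`. -/
def dil {d : ℕ} (a t : ℝ) (f : Rd d → ℝ) : Rd d → ℝ := fun x => a * f (t • x)

lemma pderiv1_dil {d : ℕ} (j : Fin d) (a t : ℝ) (f : Rd d → ℝ) :
    pderiv1 j (dil a t f) = dil (a * t) t (pderiv1 j f) := by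
  funext x
  have h : dil a t f = a • (fun y : Rd d => f (t • y)) := by
    funext y; simp [dil]
  simp only [pderiv1, h, fderiv_const_smul_field, Pi.smul_apply, fderiv_comp_smul, dil]
  simp [mul_assoc]

lemma pderivPow_dil {d : ℕ} (j : Fin d) (n : ℕ) (a t : ℝ) (f : Rd d → ℝ) :
    pderivPow j n (dil a t f) = dil (a * t ^ n) t (pderivPow j n f) := by
  induction n with
  | zero => simp [pderivPow]
  | succ n ih => simp only [pderivPow, ih, pderiv1_dil, pow_succ, mul_assoc]

lemma foldr_dil {d : ℕ} (k : Fin d → ℕ) (L : List (Fin d)) (a t : ℝ) (f : Rd d → ℝ) :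
    ((L.map fun j => pderivPow j (k j)).foldr (· ∘ ·) id) (dil a t f) =
      dil (a * t ^ (L.map k).sum) t
        (((L.map fun j => pderivPow j (k j)).foldr (· ∘ ·) id) f) := by
  induction L with
  | nil => simp
  | cons j L ih =>
    simp only [List.map_cons, List.foldr_cons, Function.comp_apply, ih, pderivPow_dil,
      List.sum_cons, pow_add]
    congr 1
    ring

lemma Dk_dil {d : ℕ} (k : Fin d → ℕ) (a t : ℝ) (f : Rd d → ℝ) :
    Dk k (dil a t f) = dil (a * t ^ wt k) t (Dk k f) := by
  have h := foldr_dil k (List.finRange d) a t f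
  have hs : ((List.finRange d).map k).sum = wt k := by
    rw [← List.ofFn_eq_map, List.sum_ofFn, wt]
  rw [hs] at h
  simpa only [Dk, List.ofFn_eq_map] using h

lemma IsTestFunction.pderiv1 {d : ℕ} (j : Fin d) {f : Rd d → ℝ} (hf : IsTestFunction f) :
    IsTestFunction (pderiv1 j f) := by
  refine ⟨?_, hf.2.fderiv_apply ℝ _⟩
  have h : ContDiff ℝ (⊤ : ℕ∞) (fderiv ℝ f) := hf.1.fderiv_right (by simp)
  exact h.clm_apply contDiff_const

lemma IsTestFunction.pderivPow {d : ℕ} (j : Fin d) (n : ℕ) {f : Rd d → ℝ}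
    (hf : IsTestFunction f) : IsTestFunction (pderivPow j n f) := by
  induction n with
  | zero => exact hf
  | succ n ih => exact ih.pderiv1 j

lemma IsTestFunction.Dk {d : ℕ} (k : Fin d → ℕ) {f : Rd d → ℝ} (hf : IsTestFunction f) :
    IsTestFunction (Dk k f) := by
  have h : ∀ L : List (Fin d),
      IsTestFunction (((L.map fun j => _root_.pderivPow j (k j)).foldr (· ∘ ·) id) f) := by
    intro L
    induction L with
    | nil => exact hf
    | cons j L ih => exact ih.pderivPow j (k j)
  simpa only [_root_.Dk, List.ofFn_eq_map] using h (List.finRange d)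

/-- Only finitely many multiindices have weight at most `r`, so the corresponding derivatives of a
test function have a common bound. -/
lemma exists_Dk_bound {d : ℕ} (r : ℕ) {f : Rd d → ℝ} (hf : IsTestFunction f) :
    ∃ C : ℝ, ∀ k : Fin d → ℕ, wt k ≤ r → ∀ x, |Dk k f x| ≤ C := by
  have hb : ∀ k : Fin d → ℕ, ∃ C, ∀ x, |Dk k f x| ≤ C := fun k => by
    simpa using (hf.Dk k).2.exists_bound_of_continuous (hf.Dk k).1.continuous
  choose C hC using hb
  obtain ⟨M, hM⟩ := (Finset.image C (Fintype.piFinset fun _ => Finset.range (r + 1))).exists_le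
  refine ⟨M, fun k hk x => (hC k x).trans (hM _ (Finset.mem_image_of_mem _ ?_))⟩
  simp only [Fintype.mem_piFinset, Finset.mem_range]
  intro j
  have : k j ≤ wt k := Finset.single_le_sum (f := k) (fun _ _ => Nat.zero_le _) (Finset.mem_univ j)
  omega

/-! ### Moments -/

lemma mono_smul {d : ℕ} (m : Fin d → ℕ) (t : ℝ) (x : Rd d) :
    mono m (t • x) = t ^ wt m * mono m x := by
  simp [mono, wt, mul_pow, Finset.prod_mul_distrib, Finset.prod_pow_eq_pow_sum]

lemma continuous_mono {d : ℕ} (m : Fin d → ℕ) : Continuous (mono m : Rd d → ℝ) := by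
  unfold mono
  fun_prop

lemma IsTestFunction.integrable_mul_mono {d : ℕ} {f : Rd d → ℝ} (hf : IsTestFunction f)
    (m : Fin d → ℕ) : Integrable (fun x => f x * mono m x) :=
  (hf.1.continuous.mul (continuous_mono m)).integrable_of_hasCompactSupport hf.2.mul_right

lemma integral_dil {d : ℕ} (a : ℝ) {t : ℝ} (ht : 0 < t) (f : Rd d → ℝ) (m : Fin d → ℕ) :
    ∫ x, dil a t f x * mono m x = a * (t ^ (d + wt m))⁻¹ * ∫ x, f x * mono m x := by
  have h : ∀ x : Rd d, dil a t f x * mono m x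
      = (a * (t ^ wt m)⁻¹) * (fun y => f y * mono m y) (t • x) := by
    intro x
    simp only [dil, mono_smul]
    field_simp
  rw [integral_congr_ae (Eventually.of_forall h), integral_const_mul,
    Measure.integral_comp_smul volume (fun y : Rd d => f y * mono m y) t]
  simp only [finrank_euclideanSpace, Fintype.card_fin, smul_eq_mul, abs_inv, abs_pow,
    abs_of_pos ht, pow_add, mul_inv]
  ring

/-! ### Choice of the smooth remainder -/

/-- The scaling operator `S f (x) = 2^{d-2} f(2x)`, which preserves `|x|^{2-d}`. -/
def scaleOp {d : ℕ} (f : Rd d → ℝ) : Rd d → ℝ := dil ((2 : ℝ) ^ ((d : ℝ) - 2)) 2 f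

/-- The function `c |x|^{2-d}`. -/
def green (d : ℕ) (c : ℝ) (x : Rd d) : ℝ := c * ‖x‖ ^ ((2 : ℝ) - d)

/-- The defect `S R - R`. -/
def defect {d : ℕ} (R : Rd d → ℝ) : Rd d → ℝ := fun x => scaleOp R x - R x

lemma green_dil {d : ℕ} (c : ℝ) (n : ℕ) (x : Rd d) :
    (2 : ℝ) ^ ((n : ℝ) * ((d : ℝ) - 2)) * green d c ((2 : ℝ) ^ n • x) = green d c x := by
  have h2 : (0 : ℝ) ≤ 2 ^ n := by positivity
  have h : (2 : ℝ) ^ ((n : ℝ) * ((d : ℝ) - 2)) * ((2 : ℝ) ^ n) ^ ((2 : ℝ) - d) = 1 := by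
    rw [← Real.rpow_natCast, ← Real.rpow_mul (by norm_num), ← Real.rpow_add (by norm_num)]
    ring_nf
    simp
  rw [green, green, norm_smul, Real.norm_of_nonneg h2, Real.mul_rpow h2 (norm_nonneg _)]
  linear_combination c * ‖x‖ ^ ((2 : ℝ) - d) * h

lemma scaleOp_green {d : ℕ} (c : ℝ) (x : Rd d) : scaleOp (green d c) x = green d c x := by
  simpa [scaleOp, dil] using green_dil c 1 x

lemma contDiff_dil {d : ℕ} (a t : ℝ) {f : Rd d → ℝ} (hf : ContDiff ℝ (⊤ : ℕ∞) f) :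
    ContDiff ℝ (⊤ : ℕ∞) (dil a t f) :=
  contDiff_const.mul (hf.comp (contDiff_const_smul t))

lemma contDiff_defect {d : ℕ} {R : Rd d → ℝ} (hR : ContDiff ℝ (⊤ : ℕ∞) R) :
    ContDiff ℝ (⊤ : ℕ∞) (defect R) :=
  (contDiff_dil _ _ hR).sub hR

lemma defect_eq_zero {d : ℕ} {c : ℝ} {R : Rd d → ℝ}
    (h : ∀ x, 1 ≤ ‖x‖ → R x = green d c x) {x : Rd d} (hx : 1 ≤ ‖x‖) : defect R x = 0 := by
  have h2 : 1 ≤ ‖(2 : ℝ) • x‖ := by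
    rw [norm_smul, Real.norm_of_nonneg (by norm_num)]
    linarith
  have hs : scaleOp R x = scaleOp (green d c) x := by simp only [scaleOp, dil, h _ h2]
  rw [defect, hs, scaleOp_green, h x hx, sub_self]

lemma tsupport_defect {d : ℕ} {c : ℝ} {R : Rd d → ℝ}
    (h : ∀ x, 1 ≤ ‖x‖ → R x = green d c x) : tsupport (defect R) ⊆ closedBall 0 1 := by
  refine closure_minimal (fun x hx => ?_) isClosed_closedBall
  rw [mem_closedBall_zero_iff]
  by_contra hlt
  exact hx (defect_eq_zero h (not_le.1 hlt).le)

lemma isTestFunction_defect {d : ℕ} {c : ℝ} {R : Rd d → ℝ} (hR : ContDiff ℝ (⊤ : ℕ∞) R)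
    (h : ∀ x, 1 ≤ ‖x‖ → R x = green d c x) : IsTestFunction (defect R) :=
  ⟨contDiff_defect hR, (isCompact_closedBall 0 1).of_isClosed_subset (isClosed_tsupport _)
    (tsupport_defect h)⟩

/-- Cutting off the singularity at the origin. -/
lemma exists_cutoff (d : ℕ) (c : ℝ) : ∃ R : Rd d → ℝ, ContDiff ℝ (⊤ : ℕ∞) R ∧
    ∀ x, 1 ≤ ‖x‖ → R x = green d c x := by
  let χ : ContDiffBump (0 : Rd d) := ⟨1 / 2, 1, by norm_num, by norm_num⟩
  refine ⟨fun x => (1 - χ x) * green d c x, ?_, fun x hx => ?_⟩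
  · rw [contDiff_iff_contDiffAt]
    intro x
    by_cases hx : x = 0
    · subst hx
      have h : (fun x => (1 - χ x) * green d c x) =ᶠ[nhds 0] fun _ => 0 := by
        filter_upwards [χ.eventuallyEq_one] with y hy
        simp [hy]
      exact contDiffAt_const.congr_of_eventuallyEq h
    · exact (contDiffAt_const.sub χ.contDiffAt).mul
        (contDiffAt_const.mul ((contDiffAt_norm ℝ hx).rpow_const_of_ne (norm_ne_zero_iff.2 hx)))
  · have : χ x = 0 := χ.zero_of_le_dist (by simpa using hx)
    simp [this]

lemma integral_scaleOp {d : ℕ} (f : Rd d → ℝ) (m : Fin d → ℕ) :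
    ∫ x, scaleOp f x * mono m x = ((2 : ℝ) ^ (2 + wt m))⁻¹ * ∫ x, f x * mono m x := by
  rw [scaleOp, integral_dil _ (by norm_num)]
  congr 1
  rw [Real.rpow_sub (by norm_num), Real.rpow_natCast, pow_add, pow_add]
  norm_num
  field_simp

/-- The remainder can be chosen such that its defect has vanishing moments up to any given
order. -/
lemma exists_remainder (d : ℕ) (c : ℝ) (N : ℕ) : ∃ R : Rd d → ℝ, ContDiff ℝ (⊤ : ℕ∞) R ∧
    (∀ x, 1 ≤ ‖x‖ → R x = green d c x) ∧
    ∀ m : Fin d → ℕ, wt m < N → ∫ x, defect R x * mono m x = 0 := by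
  induction N with
  | zero =>
    obtain ⟨R, h1, h2⟩ := exists_cutoff d c
    exact ⟨R, h1, h2, fun m hm => absurd hm (Nat.not_lt_zero _)⟩
  | succ N ih =>
    obtain ⟨R, hR, hG, hm⟩ := ih
    set a : ℝ := ((2 : ℝ) ^ (2 + N))⁻¹ with ha
    have ha1 : 1 - a ≠ 0 := by
      have : a < 1 := inv_lt_one_of_one_lt₀ (one_lt_pow₀ (by norm_num) (by omega))
      linarith
    have hT := isTestFunction_defect hR hG
    refine ⟨fun x => R x + (1 - a)⁻¹ * defect R x,
      hR.add (contDiff_const.mul (contDiff_defect hR)), fun x hx => ?_, fun m hmN => ?_⟩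
    · simp only [defect_eq_zero hG hx, hG x hx, mul_zero, add_zero]
    · have hd : ∀ x, defect (fun x => R x + (1 - a)⁻¹ * defect R x) x * mono m x
          = (1 - a)⁻¹ * (scaleOp (defect R) x * mono m x)
            - (1 - a)⁻¹ * a * (defect R x * mono m x) := by
        intro x
        simp only [defect, scaleOp, dil]
        field_simp
        ring
      have hS : IsTestFunction (scaleOp (defect R)) :=
        ⟨contDiff_dil _ _ hT.1, (hT.2.comp_smul (two_ne_zero : (2 : ℝ) ≠ 0)).mul_left⟩
      simp_rw [hd]
      rw [integral_sub ((hS.integrable_mul_mono m).const_mul _)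
        ((hT.integrable_mul_mono m).const_mul _), integral_const_mul, integral_const_mul,
        integral_scaleOp]
      rcases Nat.lt_succ_iff_lt_or_eq.1 hmN with h | h
      · rw [hm m h]; ring
      · rw [h, ← ha]; ring

/-- **Decomposition of the Green's function of the Laplacian** on `ℝ^d`, `d ≥ 3`:
`G(x) = c_d |x|^{2-d}` can be written as `K + R` with `R` globally smooth and
`K = Σ_n K_n` supported in the unit ball, where the `K_n` form a dyadic family of smooth
kernels with scaling bounds of order `2 - d` annihilating polynomials of degree `≤ N`. -/
theorem greens_function_decomposition
    (d : ℕ) (hd : 3 ≤ d) (c : ℝ) (N r : ℕ) :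
    ∃ (K R : Rd d → ℝ) (Kn : ℕ → Rd d → ℝ),
      (∀ x : Rd d, x ≠ 0 → c * ‖x‖ ^ ((2 : ℝ) - d) = K x + R x) ∧
      ContDiff ℝ (⊤ : ℕ∞) R ∧
      Function.support K ⊆ Metric.closedBall 0 1 ∧
      (∀ x : Rd d, x ≠ 0 → K x = ∑' n : ℕ, Kn n x) ∧
      (∀ n, ContDiff ℝ (⊤ : ℕ∞) (Kn n)) ∧
      (∀ n, tsupport (Kn n) ⊆ Metric.closedBall 0 ((2 : ℝ)⁻¹ ^ n)) ∧
      (∃ C : ℝ, ∀ n, ∀ k : Fin d → ℕ, wt k ≤ r → ∀ x : Rd d,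
        |Dk k (Kn n) x| ≤ C * (2 : ℝ) ^ ((n : ℝ) * ((d : ℝ) - 2 + (wt k : ℝ)))) ∧
      (∀ n, ∀ m : Fin d → ℕ, wt m ≤ N → ∫ x, Kn n x * mono m x = 0) := by
  obtain ⟨R, hR, hG, hm⟩ := exists_remainder d c (N + 1)
  have hT := isTestFunction_defect hR hG
  obtain ⟨C, hC⟩ := exists_Dk_bound r hT
  -- `F n` is `Sⁿ (G - R)`, and the kernels are the increments `F n - F (n + 1) = Sⁿ (S R - R)`.
  let A : ℕ → ℝ := fun n => (2 : ℝ) ^ ((n : ℝ) * ((d : ℝ) - 2))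
  let F : ℕ → Rd d → ℝ := fun n => dil (A n) (2 ^ n) (fun x => green d c x - R x)
  have hA : ∀ n, A (n + 1) = A n * (2 : ℝ) ^ ((d : ℝ) - 2) := by
    intro n
    simp only [A]
    rw [← Real.rpow_add (by norm_num)]
    push_cast
    ring_nf
  have hF : ∀ n x, F n x = green d c x - A n * R ((2 : ℝ) ^ n • x) := by
    intro n x
    have h := green_dil c n x
    simp only [F, dil, A]
    linear_combination h
  have htel : ∀ n x, dil (A n) (2 ^ n) (defect R) x = F n x - F (n + 1) x := by
    intro n x
    rw [hF, hF, hA]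
    simp only [dil, defect, scaleOp, smul_smul, ← pow_succ']
    ring
  have hFz : ∀ n x, 1 ≤ ‖(2 : ℝ) ^ n • x‖ → F n x = 0 := by
    intro n x hx
    simp only [F, dil, hG _ hx, sub_self, mul_zero]
  refine ⟨fun x => green d c x - R x, R, fun n => dil (A n) (2 ^ n) (defect R),
    fun x _ => (sub_add_cancel _ _).symm, hR, fun x hx => ?_, fun x hx => ?_,
    fun n => contDiff_dil _ _ hT.1, fun n => ?_, ⟨C, fun n k hk x => ?_⟩, fun n m hmN => ?_⟩
  · rw [mem_closedBall_zero_iff]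
    by_contra hlt
    exact hx (by simp [hG x (not_le.1 hlt).le])
  · have hpos : 0 < ‖x‖ := norm_pos_iff.2 hx
    obtain ⟨n₀, hn₀⟩ := pow_unbounded_of_one_lt ‖x‖⁻¹ (one_lt_two : (1 : ℝ) < 2)
    have hbig : ∀ n, n₀ ≤ n → F n x = 0 := by
      intro n hn
      refine hFz n x ?_
      rw [norm_smul, Real.norm_of_nonneg (by positivity)]
      have h1 : ‖x‖⁻¹ ≤ 2 ^ n := hn₀.le.trans (pow_le_pow_right₀ (by norm_num) hn)
      calc (1 : ℝ) = ‖x‖⁻¹ * ‖x‖ := (inv_mul_cancel₀ hpos.ne').symm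
        _ ≤ 2 ^ n * ‖x‖ := by gcongr
    simp_rw [htel]
    rw [tsum_eq_sum (s := Finset.range n₀), Finset.sum_range_sub' (fun n => F n x),
      hbig n₀ le_rfl, hF]
    · simp [A]
    · intro n hn
      rw [Finset.mem_range, not_lt] at hn
      rw [hbig n hn, hbig (n + 1) (by omega), sub_zero]
  · refine closure_minimal (fun x hx => ?_) isClosed_closedBall
    rw [mem_closedBall_zero_iff]
    by_contra hlt
    refine hx ?_
    have h1 : 1 ≤ ‖(2 : ℝ) ^ n • x‖ := by
      rw [norm_smul, Real.norm_of_nonneg (by positivity)]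
      calc (1 : ℝ) = 2 ^ n * (2⁻¹) ^ n := by rw [← mul_pow]; norm_num
        _ ≤ 2 ^ n * ‖x‖ := by gcongr; exact (not_le.1 hlt).le
    simp only [dil, defect_eq_zero hG h1, mul_zero]
  · have hpow : A n * ((2 : ℝ) ^ n) ^ wt k
        = (2 : ℝ) ^ ((n : ℝ) * ((d : ℝ) - 2 + (wt k : ℝ))) := by
      rw [mul_add, Real.rpow_add (by norm_num), ← pow_mul]
      congr 1
      rw [← Nat.cast_mul, Real.rpow_natCast]
    rw [Dk_dil, hpow, dil, abs_mul, abs_of_pos (by positivity), mul_comm]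
    gcongr
    exact hC k hk _
  · rw [integral_dil _ (by positivity), hm m (by omega), mul_zero]
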